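/- Let S be a finite set. Every sequence (W_n)_{n≥1} of S-colored graphons has a subsequence (W_{n_k}) and an S-colored graphon W_0 such that δ_□^S(W_{n_k}, W_0) → 0 as k → ∞. Equivalently, the space of S-colored graphons modulo δ_□^S-distance zero is a compact metric space. -/

import Mathlib

open MeasureTheory Set Filter
open scoped symmDiff

noncomputable section

/-- The unit interval `[0,1]` as a subset of `ℝ`. -/
def I01 : Set ℝ := Set.Icc 0 1

/-- A graphon: a symmetric measurable kernel with values in `[0,1]`. -/
structure Graphon where
  W : ℝ → ℝ → ℝ
  measurable : Measurable (Function.uncurry W)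
  symm : ∀ x y, W x y = W y x
  nonneg : ∀ x y, 0 ≤ W x y
  le_one : ∀ x y, W x y ≤ 1

/-- The cut norm `‖U‖_□` of a kernel `U`. -/
def cutNorm (U : ℝ → ℝ → ℝ) : ℝ :=
  sSup { r | ∃ A B : Set ℝ, MeasurableSet A ∧ MeasurableSet B ∧ A ⊆ I01 ∧ B ⊆ I01 ∧
    r = |∫ x in A, ∫ y in B, U x y| }

/-- A measure-preserving bijection of `[0,1]`. -/
def IsMPB (σ : ℝ → ℝ) : Prop :=
  Measurable σ ∧ Set.BijOn σ I01 I01 ∧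
    MeasurePreserving σ (volume.restrict I01) (volume.restrict I01)

/-- An `S`-colored graphon: a graphon together with a coloring `c : [0,1] → S` with
measurable color classes. -/
structure CGraphon (S : Type*) where
  K : Graphon
  c : ℝ → S
  measC : ∀ s : S, MeasurableSet (c ⁻¹' {s})

/-- The color part of the colored cut distance:
`Σ_{s ∈ S} μ(c⁻¹(s) Δ c'⁻¹(s))` (color classes as subsets of `[0,1]`). -/
def colorDist {S : Type*} [Fintype S] (c c' : ℝ → S) : ℝ :=
  ∑ s : S, (volume ((I01 ∩ c ⁻¹' {s}) ∆ (I01 ∩ c' ⁻¹' {s}))).toReal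

/-- The colored cut distance `δ_□^S(W, W') = inf_σ ‖W − (W')^σ‖_□^S`, the infimum running
over measure-preserving bijections `σ` of `[0,1]`. -/
def deltaCutS {S : Type*} [Fintype S] (W W' : CGraphon S) : ℝ :=
  sInf { r | ∃ σ, IsMPB σ ∧
    r = cutNorm (fun x y => W.K.W x y - W'.K.W (σ x) (σ y))
        + colorDist W.c fun y => W'.c (σ y) }

/-!
Split `[0,1]` into color classes and refine repeatedly by two sets that nearly attain the cut norm
of the difference between the kernel and its average over the current cells. By Pythagoras the
squares of these cut norms sum to at most `4`, uniformly over all graphons. Recording the color of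
a point and its membership in the successive sets codes the points of `W_n` by the compact space
`S × (Bool × Bool)^ℕ`. By Prokhorov, along a subsequence the laws of the codes converge weakly to
some `μ`, and so do the laws weighted by the kernels, whose limit has a density `w` with respect
to `μ ⊗ μ`. The limit graphon is `w`, transported to `[0,1]`. To compare it with `W_n`, truncate all
codes at depth `j`: the two finite labellings have nearly equal class sizes, so a
measure-preserving bijection nearly matches them; the kernels have nearly equal cell averages; and
the cost of averaging is small for `W_n` by regularity and for `w` by martingale convergence.
-/

/-! ### Matching finite words -/

section Words

variable {α ι : Type*} [Fintype α] [DecidableEq ι]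

lemma card_ne_swap_lt [DecidableEq α] {r q : α → ι} {i j : α} (hij : r i = q j) (hi : r i ≠ q i)
    (hj : r j ≠ q j) :
    (Finset.univ.filter fun l => r l ≠ q (Equiv.swap i j l)).card <
      (Finset.univ.filter fun l => r l ≠ q l).card := by
  refine Finset.card_lt_card ((Finset.ssubset_iff_of_subset fun l hl => ?_).2 ⟨i, ?_⟩)
  · rw [Finset.mem_filter_univ] at hl ⊢
    by_cases hli : l = i
    · exact hli ▸ hi
    by_cases hlj : l = j
    · exact hlj ▸ hj
    · rwa [Equiv.swap_apply_of_ne_of_ne hli hlj] at hl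
  · simp [← hij, hi]

lemma card_filter_eq_eq_add (r q : α → ι) (a : ι) :
    (Finset.univ.filter fun i => r i = a).card =
      (Finset.univ.filter fun i => r i ≠ q i ∧ r i = a).card +
        (Finset.univ.filter fun i => r i = a ∧ q i = a).card := by
  rw [← Finset.card_filter_add_card_filter_not (s := Finset.univ.filter fun i => r i = a)
    (fun i => r i ≠ q i), Finset.filter_filter, Finset.filter_filter]
  congr 2 <;> ext i <;> grind

lemma card_ne_and_eq_le_abs_sub [DecidableEq α] {r q : α → ι}
    (hmin : ∀ i j, (Finset.univ.filter fun l => r l ≠ q l).card ≤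
      (Finset.univ.filter fun l => r l ≠ q (Equiv.swap i j l)).card) (a : ι) :
    ((Finset.univ.filter fun i => r i ≠ q i ∧ r i = a).card : ℝ) ≤
      |((Finset.univ.filter fun i => r i = a).card : ℝ) -
        (Finset.univ.filter fun i => q i = a).card| := by
  by_cases hmis : ∃ i, r i ≠ q i ∧ r i = a
  · obtain ⟨i, hi, rfl⟩ := hmis
    have hq : ∀ j, q j = r i → r j = r i := fun j hj => by
      by_contra hne
      exact (hmin i j).not_gt (card_ne_swap_lt hj.symm hi (hj ▸ hne))
    have hboth : (Finset.univ.filter fun j => r j = r i ∧ q j = r i) =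
        Finset.univ.filter fun j => q j = r i :=
      Finset.filter_congr fun j _ => and_iff_right_of_imp (hq j)
    rw [card_filter_eq_eq_add r q (r i), hboth, Nat.cast_add, add_sub_cancel_right]
    exact le_abs_self _
  · have hempty : (Finset.univ.filter fun i => r i ≠ q i ∧ r i = a) = ∅ :=
      Finset.filter_eq_empty_iff.2 fun i _ hi => hmis ⟨i, hi⟩
    rw [hempty, Finset.card_empty, Nat.cast_zero]
    exact abs_nonneg _

-- A permutation minimising the number of mismatches works, since no transposition improves it.
theorem exists_perm_card_ne_le [Fintype ι] (r q : α → ι) :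
    ∃ π : Equiv.Perm α, ((Finset.univ.filter fun i => r i ≠ q (π i)).card : ℝ) ≤
      ∑ a, |((Finset.univ.filter fun i => r i = a).card : ℝ) -
        (Finset.univ.filter fun i => q i = a).card| := by
  classical
  obtain ⟨π, -, hπ⟩ := Finset.exists_min_image (Finset.univ : Finset (Equiv.Perm α))
    (fun π => (Finset.univ.filter fun i => r i ≠ q (π i)).card) ⟨1, Finset.mem_univ _⟩
  have hcount : ∀ a, (Finset.univ.filter fun i => q i = a).card =
      (Finset.univ.filter fun i => (q ∘ π) i = a).card := fun a =>
    (Finset.card_equiv π fun i => by simp).symm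
  refine ⟨π, ?_⟩
  rw [Finset.card_eq_sum_card_fiberwise (f := r) (t := Finset.univ) (fun i _ => by simp)]
  push_cast
  refine Finset.sum_le_sum fun a _ => ?_
  rw [hcount, Finset.filter_filter]
  exact card_ne_and_eq_le_abs_sub (q := q ∘ π)
    (fun i j => hπ ((Equiv.swap i j).trans π) (Finset.mem_univ _)) a

end Words

/-! ### Matching finite labellings of the unit interval -/

/-- Lebesgue measure on `[0,1]`, as a probability measure on `ℝ`. -/
abbrev unitMeasure : Measure ℝ := volume.restrict I01

instance : IsProbabilityMeasure unitMeasure :=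
  ⟨by simp [unitMeasure, I01]⟩

lemma unitMeasure_eq_restrict_Ico : unitMeasure = volume.restrict (Ico 0 1) :=
  (Measure.restrict_congr_set Ico_ae_eq_Icc).symm

lemma ae_unitMeasure_mem_Ico : ∀ᵐ x ∂unitMeasure, x ∈ Ico (0 : ℝ) 1 := by
  rw [unitMeasure_eq_restrict_Ico]
  exact ae_restrict_mem measurableSet_Ico

section Blocks

variable {n : ℕ}

/-- The `i`-th of the `n` half-open intervals of length `1 / n` that make up `[0, 1)`. -/
def block (i : Fin n) : Set ℝ := Ico ((i : ℝ) / n) (((i : ℝ) + 1) / n)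

lemma measurableSet_block (i : Fin n) : MeasurableSet (block i) := measurableSet_Ico

lemma add_mem_block_iff (i j : Fin n) (x : ℝ) :
    x + ((j : ℝ) - (i : ℝ)) / n ∈ block j ↔ x ∈ block i := by
  simp only [block, mem_Ico, sub_div, add_div]
  constructor <;> rintro ⟨hl, hr⟩ <;> constructor <;> linarith

variable [NeZero n]

variable (n) in
/-- The index of the block containing a point of `[0, 1)`; arbitrary at other points. -/
def blockIndex (x : ℝ) : Fin n := Fin.ofNat n ⌊(n : ℝ) * x⌋₊

lemma measurable_blockIndex : Measurable (blockIndex n) :=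
  (measurable_from_top (f := Fin.ofNat n)).comp
    (Nat.measurable_floor.comp (measurable_const.mul measurable_id))

lemma mem_block_iff {i : Fin n} {x : ℝ} :
    x ∈ block i ↔ x ∈ Ico (0 : ℝ) 1 ∧ blockIndex n x = i := by
  have hn : (0 : ℝ) < n := mod_cast NeZero.pos n
  have hi : (i : ℝ) + 1 ≤ n := mod_cast i.2
  rw [block, mem_Ico, div_le_iff₀ hn, lt_div_iff₀ hn]
  constructor
  · rintro ⟨hl, hr⟩
    have hx : 0 ≤ x := nonneg_of_mul_nonneg_left ((Nat.cast_nonneg _).trans hl) hn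
    have hfloor : ⌊(n : ℝ) * x⌋₊ = i :=
      (Nat.floor_eq_iff (by positivity)).2 ⟨by linarith, by linarith⟩
    exact ⟨⟨hx, by nlinarith⟩, Fin.ext (by simp [blockIndex, hfloor])⟩
  · rintro ⟨⟨hx, hx'⟩, rfl⟩
    have hlt : ⌊(n : ℝ) * x⌋₊ < n := (Nat.floor_lt (by positivity)).2 (by nlinarith)
    rw [blockIndex, Fin.val_ofNat, Nat.mod_eq_of_lt hlt, mul_comm x]
    exact ⟨Nat.floor_le (by positivity), Nat.lt_floor_add_one _⟩

lemma pairwise_disjoint_block : Pairwise (Function.onFun Disjoint (block (n := n))) :=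
  fun _ _ hij => disjoint_left.2 fun _ hi hj =>
    hij ((mem_block_iff.1 hi).2.symm.trans (mem_block_iff.1 hj).2)

lemma iUnion_block : ⋃ i : Fin n, block i = Ico (0 : ℝ) 1 := by
  ext x
  simp [mem_block_iff]

lemma unitMeasure_apply_eq_sum_block {s : Set ℝ} (hs : MeasurableSet s) :
    unitMeasure s = ∑ i : Fin n, volume (s ∩ block i) := by
  rw [unitMeasure_eq_restrict_Ico, Measure.restrict_apply hs, ← iUnion_block (n := n),
    inter_iUnion, measure_iUnion _ fun i => hs.inter (measurableSet_block i), tsum_fintype]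
  exact fun i j hij => (pairwise_disjoint_block hij).mono inter_subset_right inter_subset_right

lemma unitMeasure_real_block (i : Fin n) : unitMeasure.real (block i) = 1 / n := by
  have hsub : block i ⊆ Ico (0 : ℝ) 1 := iUnion_block (n := n) ▸ subset_iUnion _ i
  rw [unitMeasure_eq_restrict_Ico, measureReal_restrict_apply (measurableSet_block i),
    inter_eq_left.2 hsub, block, Real.volume_real_Ico_of_le (by gcongr; linarith)]
  ring

lemma unitMeasure_real_blockIndex_mem (F : Finset (Fin n)) :
    unitMeasure.real {x | blockIndex n x ∈ F} = F.card / n := by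
  have hae : {x | blockIndex n x ∈ F} =ᵐ[unitMeasure] ⋃ i ∈ F, block i := by
    filter_upwards [ae_unitMeasure_mem_Ico] with x hx
    refine propext ?_
    change blockIndex n x ∈ F ↔ x ∈ ⋃ i ∈ F, block i
    simp [mem_block_iff, hx.1, hx.2]
  rw [measureReal_congr hae, measureReal_biUnion_finset
    (fun i _ j _ hij => pairwise_disjoint_block hij) fun i _ => measurableSet_block i]
  simp [unitMeasure_real_block, div_eq_mul_inv]

/-- The piecewise translation of the line that carries the block `i` onto the block `π i` and fixes
everything outside `[0, 1)`. -/
def blockPerm (π : Equiv.Perm (Fin n)) (x : ℝ) : ℝ :=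
  (Ico 0 1).piecewise (fun x => x + ((π (blockIndex n x) : ℝ) - (blockIndex n x : ℝ)) / n) id x

variable (π : Equiv.Perm (Fin n))

lemma blockPerm_of_mem {i : Fin n} {x : ℝ} (hx : x ∈ block i) :
    blockPerm π x = x + ((π i : ℝ) - (i : ℝ)) / n := by
  obtain ⟨hx', rfl⟩ := mem_block_iff.1 hx
  exact piecewise_eq_of_mem _ _ _ hx'

lemma blockPerm_of_notMem {x : ℝ} (hx : x ∉ Ico (0 : ℝ) 1) : blockPerm π x = x :=
  piecewise_eq_of_notMem _ _ _ hx

lemma blockPerm_mem_block {i : Fin n} {x : ℝ} (hx : x ∈ block i) : blockPerm π x ∈ block (π i) := by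
  rw [blockPerm_of_mem π hx]
  exact (add_mem_block_iff i (π i) x).2 hx

lemma blockIndex_blockPerm {x : ℝ} (hx : x ∈ Ico (0 : ℝ) 1) :
    blockIndex n (blockPerm π x) = π (blockIndex n x) :=
  (mem_block_iff.1 (blockPerm_mem_block π (mem_block_iff.2 ⟨hx, rfl⟩))).2

lemma blockPerm_symm_blockPerm (x : ℝ) : blockPerm π.symm (blockPerm π x) = x := by
  by_cases hx : x ∈ Ico (0 : ℝ) 1
  · have hmem : x ∈ block (blockIndex n x) := mem_block_iff.2 ⟨hx, rfl⟩
    rw [blockPerm_of_mem π.symm (blockPerm_mem_block π hmem), blockPerm_of_mem π hmem,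
      Equiv.symm_apply_apply]
    ring
  · rw [blockPerm_of_notMem π hx, blockPerm_of_notMem _ hx]

lemma measurable_blockPerm : Measurable (blockPerm π) := by
  refine Measurable.piecewise measurableSet_Ico (measurable_id.add ?_) measurable_id
  exact (measurable_from_top (f := fun i : Fin n => ((π i : ℝ) - (i : ℝ)) / n)).comp
    measurable_blockIndex

lemma mapsTo_blockPerm : MapsTo (blockPerm π) I01 I01 := by
  intro x hx
  by_cases hx' : x ∈ Ico (0 : ℝ) 1
  · exact Ico_subset_Icc_self
      (mem_block_iff.1 (blockPerm_mem_block π (mem_block_iff.2 ⟨hx', rfl⟩))).1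
  · rwa [blockPerm_of_notMem π hx']

lemma measurePreserving_blockPerm : MeasurePreserving (blockPerm π) unitMeasure unitMeasure := by
  refine ⟨measurable_blockPerm π, Measure.ext fun s hs => ?_⟩
  rw [Measure.map_apply (measurable_blockPerm π) hs,
    unitMeasure_apply_eq_sum_block (n := n) (measurable_blockPerm π hs),
    unitMeasure_apply_eq_sum_block (n := n) hs,
    ← Equiv.sum_comp π fun i => volume (s ∩ block i)]
  refine Finset.sum_congr rfl fun i _ => ?_
  rw [← measure_preimage_add_right volume (((π i : ℝ) - (i : ℝ)) / n) (s ∩ block (π i))]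
  congr 1
  ext x
  simp only [mem_inter_iff, mem_preimage, add_mem_block_iff]
  exact and_congr_left fun hx => by rw [blockPerm_of_mem π hx]

lemma isMPB_blockPerm : IsMPB (blockPerm π) := by
  refine ⟨measurable_blockPerm π, BijOn.mk (mapsTo_blockPerm π) ?_ ?_,
    measurePreserving_blockPerm π⟩
  · exact (Function.LeftInverse.injective (blockPerm_symm_blockPerm π)).injOn
  · exact fun y hy => ⟨blockPerm π.symm y, mapsTo_blockPerm _ hy,
      blockPerm_symm_blockPerm π.symm y⟩

lemma abs_sub_blockIndex_div_lt {x : ℝ} (hx : x ∈ Ico (0 : ℝ) 1) :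
    |x - (blockIndex n x : ℝ) / n| < 1 / n := by
  obtain ⟨hl, hr⟩ := mem_block_iff.2 (⟨hx, rfl⟩ : _ ∧ blockIndex n x = blockIndex n x)
  rw [abs_of_nonneg (sub_nonneg.2 hl)]
  rw [add_div] at hr
  linarith

end Blocks

lemma eventually_exists_blockIndex_near {f : ℝ → ℝ} (hf : Integrable f unitMeasure) {δ ε : ℝ}
    (hδ : 0 < δ) (hε : 0 < ε) : ∀ᶠ n : ℕ in atTop, ∃ v : Fin (n + 1) → ℝ,
      unitMeasure.real {x | δ ≤ |f x - v (blockIndex (n + 1) x)|} ≤ ε := by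
  obtain ⟨g, hg_supp, hfg, hg_cont, hg_int⟩ :=
    hf.exists_hasCompactSupport_integral_sub_le (show 0 < δ / 2 * ε by positivity)
  obtain ⟨η, hη, hg_unif⟩ := Metric.uniformContinuous_iff.1
    (hg_supp.uniformContinuous_of_continuous hg_cont) (δ / 2) (by positivity)
  filter_upwards [tendsto_one_div_add_atTop_nhds_zero_nat.eventually_lt_const hη] with n hn
  refine ⟨fun i => g ((i : ℝ) / (n + 1 : ℕ)), ?_⟩
  have hsub : {x | δ ≤ |f x - g ((blockIndex (n + 1) x : ℝ) / (n + 1 : ℕ))|} ≤ᵐ[unitMeasure]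
      {x | δ / 2 ≤ ‖f x - g x‖} := by
    filter_upwards [ae_unitMeasure_mem_Ico] with x hx (hfar : δ ≤ |_|)
    have hnear : dist (g x) (g ((blockIndex (n + 1) x : ℝ) / (n + 1 : ℕ))) < δ / 2 :=
      hg_unif ((abs_sub_blockIndex_div_lt hx).trans (by exact_mod_cast hn))
    have htri := hfar.trans (abs_sub_le (f x) (g x) _)
    rw [Real.dist_eq] at hnear
    change δ / 2 ≤ |f x - g x|
    linarith
  have hmarkov : δ / 2 * unitMeasure.real {x | δ / 2 ≤ ‖f x - g x‖} ≤ δ / 2 * ε :=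
    (mul_meas_ge_le_integral_of_nonneg (ae_of_all _ fun x => norm_nonneg _)
      (hf.sub hg_int).norm (δ / 2)).trans hfg
  exact (ENNReal.toReal_mono (measure_ne_top _ _) (measure_mono_ae hsub)).trans
    (le_of_mul_le_mul_left hmarkov (by positivity))

lemma eventually_exists_blockIndex_approx {ι : Type*} [Finite ι] [MeasurableSpace ι]
    [MeasurableSingletonClass ι] {p : ℝ → ι} (hp : Measurable p) {ε : ℝ} (hε : 0 < ε) :
    ∀ᶠ n : ℕ in atTop, ∃ r : Fin (n + 1) → ι,
      unitMeasure.real {x | p x ≠ r (blockIndex (n + 1) x)} ≤ ε := by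
  classical
  obtain ⟨m, ⟨e⟩⟩ := Finite.exists_equiv_fin ι
  have hint : Integrable (fun x => ((e (p x) : ℕ) : ℝ)) unitMeasure :=
    .of_bound ((measurable_of_finite fun a => ((e a : ℕ) : ℝ)).comp hp).aestronglyMeasurable m
      (ae_of_all _ fun x => by simp)
  filter_upwards [eventually_exists_blockIndex_near hint one_half_pos hε] with n ⟨v, hv⟩
  have hround : ∀ i, ∃ a, ∀ b, |((e b : ℕ) : ℝ) - v i| < 1 / 2 → b = a := fun i => by
    by_cases hnear : ∃ a, |((e a : ℕ) : ℝ) - v i| < 1 / 2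
    · obtain ⟨a, ha⟩ := hnear
      refine ⟨a, fun b hb => e.injective (Fin.ext (Nat.cast_injective (R := ℤ) ?_))⟩
      have hlt : |((e b : ℕ) : ℝ) - (e a : ℕ)| < 1 := by
        rw [abs_lt] at *
        constructor <;> linarith
      exact Int.sub_eq_zero.1 (Int.abs_lt_one_iff.1 (by exact_mod_cast hlt))
    · exact ⟨p 0, fun b hb => (hnear ⟨b, hb⟩).elim⟩
  choose r hr using hround
  refine ⟨r, (measureReal_mono fun x hx => ?_).trans hv⟩
  exact not_lt.1 fun hlt => hx (hr _ _ hlt)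

section Matching

variable {ι : Type*}

lemma abs_measureReal_fiber_sub_le {Ω : Type*} [MeasurableSpace Ω] {μ : Measure Ω}
    [IsFiniteMeasure μ] (p q : Ω → ι) (a : ι) :
    |μ.real (p ⁻¹' {a}) - μ.real (q ⁻¹' {a})| ≤ μ.real {x | p x ≠ q x} := by
  have hsub : ∀ p q : Ω → ι, p ⁻¹' {a} ⊆ q ⁻¹' {a} ∪ {x | p x ≠ q x} := fun p q x hx =>
    or_iff_not_imp_right.2 fun hpq => (not_not.1 hpq).symm.trans hx
  have hle : ∀ p q : Ω → ι, μ.real (p ⁻¹' {a}) ≤ μ.real (q ⁻¹' {a}) + μ.real {x | p x ≠ q x} :=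
    fun p q => (measureReal_mono (hsub p q)).trans (measureReal_union_le _ _)
  refine abs_sub_le_iff.2 ⟨sub_left_le_of_le_add (hle p q), sub_left_le_of_le_add ?_⟩
  simpa only [ne_comm] using hle q p

lemma abs_fiber_sub_card_div_le [DecidableEq ι] {n : ℕ} [NeZero n] (p : ℝ → ι) (r : Fin n → ι)
    (a : ι) :
    |unitMeasure.real (p ⁻¹' {a}) - (Finset.univ.filter fun i => r i = a).card / n| ≤
      unitMeasure.real {x | p x ≠ r (blockIndex n x)} := by
  have hcard := unitMeasure_real_blockIndex_mem (Finset.univ.filter fun i => r i = a)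
  simp only [Finset.mem_filter_univ] at hcard
  rw [← hcard]
  exact abs_measureReal_fiber_sub_le p (fun x => r (blockIndex n x)) a

variable [MeasurableSpace ι] [MeasurableSingletonClass ι]

lemma measureReal_ne_blockPerm_le [Countable ι] [DecidableEq ι] {n : ℕ} [NeZero n] (p : ℝ → ι)
    {q : ℝ → ι} (hq : Measurable q) (r s : Fin n → ι) (π : Equiv.Perm (Fin n)) :
    unitMeasure.real {x | p x ≠ q (blockPerm π x)} ≤
      unitMeasure.real {x | p x ≠ r (blockIndex n x)} +
        (Finset.univ.filter fun i => r i ≠ s (π i)).card / n +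
        unitMeasure.real {x | q x ≠ s (blockIndex n x)} := by
  have hmeas : MeasurableSet {x | q x ≠ s (blockIndex n x)} :=
    (measurableSet_eq_fun hq ((measurable_of_finite s).comp measurable_blockIndex)).compl
  have hcard := unitMeasure_real_blockIndex_mem (Finset.univ.filter fun i => r i ≠ s (π i))
  simp only [Finset.mem_filter_univ] at hcard
  rw [← hcard, ← (measurePreserving_blockPerm π).measureReal_preimage hmeas.nullMeasurableSet]
  refine le_trans ?_ ((measureReal_union_le _ _).trans
    (add_le_add_left (measureReal_union_le _ _) _))
  refine ENNReal.toReal_mono (measure_ne_top _ _) (measure_mono_ae ?_)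
  filter_upwards [ae_unitMeasure_mem_Ico] with x hx hne
  by_contra hcon
  obtain ⟨⟨hpr, hrs⟩, hqs⟩ := (not_or.1 hcon).imp_left not_or.1
  have hqs : q (blockPerm π x) = s (π (blockIndex n x)) :=
    blockIndex_blockPerm π hx ▸ not_not.1 hqs
  exact hne ((not_not.1 hpr).trans ((not_not.1 hrs).trans hqs.symm))

theorem exists_isMPB_measureReal_ne_le [Fintype ι] {p q : ℝ → ι} (hp : Measurable p)
    (hq : Measurable q) {ε : ℝ} (hε : 0 < ε) :
    ∃ σ, IsMPB σ ∧ unitMeasure.real {x | p x ≠ q (σ x)} ≤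
      ∑ a, |unitMeasure.real (p ⁻¹' {a}) - unitMeasure.real (q ⁻¹' {a})| + ε := by
  classical
  set η : ℝ := ε / (2 * Fintype.card ι + 2) with hη
  have hη_pos : 0 < η := by positivity
  obtain ⟨n, ⟨r, hr⟩, s, hs⟩ := ((eventually_exists_blockIndex_approx hp hη_pos).and
    (eventually_exists_blockIndex_approx hq hη_pos)).exists
  obtain ⟨π, hπ⟩ := exists_perm_card_ne_le r s
  refine ⟨blockPerm π, isMPB_blockPerm π, ?_⟩
  have hcount : ((Finset.univ.filter fun i => r i ≠ s (π i)).card : ℝ) / (n + 1 : ℕ) ≤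
      ∑ a, (|unitMeasure.real (p ⁻¹' {a}) - unitMeasure.real (q ⁻¹' {a})| + 2 * η) := by
    refine (div_le_div_of_nonneg_right hπ (Nat.cast_nonneg _)).trans ?_
    rw [Finset.sum_div]
    refine Finset.sum_le_sum fun a _ => ?_
    have hpr := abs_le.1 ((abs_fiber_sub_card_div_le p r a).trans hr)
    have hqs := abs_le.1 ((abs_fiber_sub_card_div_le q s a).trans hs)
    have hpq := neg_abs_le (unitMeasure.real (p ⁻¹' {a}) - unitMeasure.real (q ⁻¹' {a}))
    have hpq' := le_abs_self (unitMeasure.real (p ⁻¹' {a}) - unitMeasure.real (q ⁻¹' {a}))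
    rw [← abs_of_nonneg (Nat.cast_nonneg (α := ℝ) (n + 1)), ← abs_div, sub_div, abs_le]
    constructor <;> linarith
  have hη_sum : Fintype.card ι * (2 * η) + 2 * η = ε := by rw [hη]; field_simp
  have hsplit := measureReal_ne_blockPerm_le p hq r s π
  rw [Finset.sum_add_distrib, Finset.sum_const, Finset.card_univ, nsmul_eq_mul] at hcount
  linarith

end Matching

/-! ### Energy increment and cut norm -/

section Energy

variable {Ω : Type*} {m m' m₀ : MeasurableSpace Ω} {μ : Measure Ω} [IsProbabilityMeasure μ]
  {f : Ω → ℝ}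

lemma sq_setIntegral_le_integral_sq (hf : MemLp f 2 μ) {s : Set Ω} (hs : MeasurableSet s) :
    (∫ x in s, f x ∂μ) ^ 2 ≤ ∫ x, f x ^ 2 ∂μ := by
  have hvar := ProbabilityTheory.variance_nonneg (s.indicator f) μ
  rw [ProbabilityTheory.variance_eq_sub (hf.indicator hs), integral_indicator hs,
    sub_nonneg] at hvar
  refine hvar.trans (integral_mono (hf.indicator hs).integrable_sq hf.integrable_sq fun x => ?_)
  by_cases hx : x ∈ s <;> simp [hx, sq_nonneg]

lemma integral_condExp_mul_condExp (hm : m ≤ m') (hm' : m' ≤ m₀) (hf : MemLp f 2 μ) :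
    ∫ x, (μ[f | m]) x * (μ[f | m']) x ∂μ = ∫ x, (μ[f | m]) x ^ 2 ∂μ := by
  have hprod : Integrable (μ[f | m] * μ[f | m']) μ :=
    (hf.condExp one_le_two).integrable_mul (hf.condExp one_le_two)
  have hpull : μ[μ[f | m] * μ[f | m'] | m] =ᵐ[μ] μ[f | m] * μ[μ[f | m'] | m] :=
    condExp_mul_of_stronglyMeasurable_left stronglyMeasurable_condExp hprod integrable_condExp
  rw [← integral_condExp (hm.trans hm') (f := fun x => (μ[f | m]) x * (μ[f | m']) x)]
  refine integral_congr_ae ?_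
  filter_upwards [hpull, condExp_condExp_of_le (f := f) (μ := μ) hm hm'] with x hx htower
  exact hx.trans (by rw [Pi.mul_apply, htower, sq])

lemma integral_sq_condExp_sub_condExp (hm : m ≤ m') (hm' : m' ≤ m₀) (hf : MemLp f 2 μ) :
    ∫ x, ((μ[f | m']) x - (μ[f | m]) x) ^ 2 ∂μ =
      ∫ x, (μ[f | m']) x ^ 2 ∂μ - ∫ x, (μ[f | m]) x ^ 2 ∂μ := by
  have hL2 : ∀ m, MemLp (μ[f | m]) 2 μ := fun m => hf.condExp one_le_two
  have hcross : Integrable (fun x => (μ[f | m]) x * (μ[f | m']) x) μ :=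
    (hL2 m).integrable_mul (hL2 m')
  have hdiff : Integrable (fun x => (μ[f | m']) x ^ 2 - 2 * ((μ[f | m]) x * (μ[f | m']) x)) μ :=
    (hL2 m').integrable_sq.sub (hcross.const_mul 2)
  have hexpand : ∀ x, ((μ[f | m']) x - (μ[f | m]) x) ^ 2 = (μ[f | m']) x ^ 2 -
      2 * ((μ[f | m]) x * (μ[f | m']) x) + (μ[f | m]) x ^ 2 := fun x => by ring
  simp_rw [hexpand]
  rw [integral_add hdiff (hL2 m).integrable_sq,
    integral_sub (hL2 m').integrable_sq (hcross.const_mul 2), integral_const_mul,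
    integral_condExp_mul_condExp hm hm' hf]
  ring

theorem sq_setIntegral_sub_condExp_le (hm : m ≤ m') (hm' : m' ≤ m₀) (hf : MemLp f 2 μ) {s : Set Ω}
    (hs : MeasurableSet[m'] s) :
    (∫ x in s, (f x - (μ[f | m]) x) ∂μ) ^ 2 ≤
      ∫ x, (μ[f | m']) x ^ 2 ∂μ - ∫ x, (μ[f | m]) x ^ 2 ∂μ := by
  have hfi : Integrable f μ := hf.integrable one_le_two
  have hcond : ∫ x in s, (f x - (μ[f | m]) x) ∂μ =
      ∫ x in s, ((μ[f | m']) x - (μ[f | m]) x) ∂μ := by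
    rw [integral_sub hfi.integrableOn integrable_condExp.integrableOn,
      integral_sub integrable_condExp.integrableOn integrable_condExp.integrableOn,
      setIntegral_condExp hm' hfi hs]
  rw [hcond, ← integral_sq_condExp_sub_condExp hm hm' hf]
  exact sq_setIntegral_le_integral_sq
    ((hf.condExp one_le_two).sub (hf.condExp one_le_two)) (hm' s hs)

lemma integral_condExp_sq_le (hm : m ≤ m₀) (hf : MemLp f 2 μ) :
    ∫ x, (μ[f | m]) x ^ 2 ∂μ ≤ ∫ x, f x ^ 2 ∂μ := by
  have hself : μ[f | m₀] =ᵐ[μ] f :=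
    condExp_of_aestronglyMeasurable' le_rfl hf.1 (hf.integrable one_le_two)
  have hself_sq : ∫ x, (μ[f | m₀]) x ^ 2 ∂μ = ∫ x, f x ^ 2 ∂μ :=
    integral_congr_ae (hself.mono fun x hx => by simp only [hx])
  rw [← hself_sq, ← sub_nonneg, ← integral_sq_condExp_sub_condExp hm le_rfl hf]
  exact integral_nonneg fun x => sq_nonneg _

end Energy

section CutNorm

variable {Ω : Type*} {m₀ : MeasurableSpace Ω} {μ : Measure Ω} {f : Ω × Ω → ℝ}

/-- The cut norm of a kernel on an arbitrary measure space. It is only meaningful for integrable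
kernels. -/
def cutNormOn {Ω : Type*} {_ : MeasurableSpace Ω} (μ : Measure Ω) (f : Ω × Ω → ℝ) : ℝ :=
  ⨆ R : {A : Set Ω // MeasurableSet A} × {B : Set Ω // MeasurableSet B},
    |∫ z in R.1.1 ×ˢ R.2.1, f z ∂μ.prod μ|

lemma abs_setIntegral_le_integral_abs {Ω : Type*} [MeasurableSpace Ω] {μ : Measure Ω} {f : Ω → ℝ}
    (hf : Integrable f μ) (s : Set Ω) : |∫ x in s, f x ∂μ| ≤ ∫ x, |f x| ∂μ :=
  abs_integral_le_integral_abs.trans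
    (setIntegral_le_integral hf.abs (ae_of_all _ fun x => abs_nonneg (f x)))

lemma abs_setIntegral_prod_le_cutNormOn (hf : Integrable f (μ.prod μ)) {A B : Set Ω}
    (hA : MeasurableSet A) (hB : MeasurableSet B) :
    |∫ z in A ×ˢ B, f z ∂μ.prod μ| ≤ cutNormOn μ f :=
  le_ciSup (f := fun R : {A : Set Ω // MeasurableSet A} × {B : Set Ω // MeasurableSet B} =>
      |∫ z in R.1.1 ×ˢ R.2.1, f z ∂μ.prod μ|)
    ⟨∫ z, |f z| ∂μ.prod μ, by rintro _ ⟨R, rfl⟩; exact abs_setIntegral_le_integral_abs hf _⟩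
    (⟨A, hA⟩, ⟨B, hB⟩)

lemma cutNormOn_nonneg : 0 ≤ cutNormOn μ f := Real.iSup_nonneg fun _ => abs_nonneg _

lemma exists_cutNormOn_le_two_mul (μ : Measure Ω) (f : Ω × Ω → ℝ) :
    ∃ A B : Set Ω, MeasurableSet A ∧ MeasurableSet B ∧
      cutNormOn μ f ≤ 2 * |∫ z in A ×ˢ B, f z ∂μ.prod μ| := by
  rcases cutNormOn_nonneg (μ := μ) (f := f) |>.eq_or_lt with hzero | hpos
  · exact ⟨∅, ∅, .empty, .empty, hzero ▸ by positivity⟩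
  · obtain ⟨⟨⟨A, hA⟩, ⟨B, hB⟩⟩, hAB⟩ := exists_lt_of_lt_ciSup (half_lt_self hpos)
    exact ⟨A, B, hA, hB, ((div_lt_iff₀' two_pos).1 hAB).le⟩

lemma cutNorm_le_cutNormOn_add {U : ℝ → ℝ → ℝ} {f : ℝ × ℝ → ℝ}
    (hU : Integrable (Function.uncurry U) (unitMeasure.prod unitMeasure))
    (hf : Integrable f (unitMeasure.prod unitMeasure)) :
    cutNorm U ≤ cutNormOn unitMeasure f +
      ∫ z, |Function.uncurry U z - f z| ∂unitMeasure.prod unitMeasure := by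
  refine csSup_le ⟨_, ∅, ∅, .empty, .empty, empty_subset _, empty_subset _, rfl⟩ ?_
  rintro _ ⟨A, B, hA, hB, hAI, hBI, rfl⟩
  have hprod : ∫ x in A, ∫ y in B, U x y =
      ∫ z in A ×ˢ B, Function.uncurry U z ∂unitMeasure.prod unitMeasure := by
    rw [setIntegral_prod _ hU.integrableOn, unitMeasure, Measure.restrict_restrict hA,
      Measure.restrict_restrict hB, inter_eq_left.2 hAI, inter_eq_left.2 hBI]
    rfl
  have hsplit : ∫ z in A ×ˢ B, Function.uncurry U z ∂unitMeasure.prod unitMeasure =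
      ∫ z in A ×ˢ B, f z ∂unitMeasure.prod unitMeasure +
        ∫ z in A ×ˢ B, (Function.uncurry U z - f z) ∂unitMeasure.prod unitMeasure := by
    rw [integral_sub hU.integrableOn hf.integrableOn, add_sub_cancel]
  rw [hprod, hsplit]
  exact (abs_add_le _ _).trans (add_le_add (abs_setIntegral_prod_le_cutNormOn hf hA hB)
    (abs_setIntegral_le_integral_abs (hU.sub hf) _))

end CutNorm

/-! ### Codes and weak regularity -/

section Regularity

variable {Ω : Type*} {m m₀ : MeasurableSpace Ω} {μ : Measure Ω} {f : Ω × Ω → ℝ}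

/-- The average of a kernel over the cells `A ×ˢ B`, where `A` and `B` range over the atoms of a
sub-σ-algebra `m`, encoded as a conditional expectation. -/
def cellAverage (m : MeasurableSpace Ω) {_ : MeasurableSpace Ω} (μ : Measure Ω)
    (f : Ω × Ω → ℝ) : Ω × Ω → ℝ :=
  (μ.prod μ)[f | m.prod m]

/-- The energy of a sub-σ-algebra `m` with respect to a kernel: the squared `L²` norm of the cell
averages. -/
def energy (m : MeasurableSpace Ω) {_ : MeasurableSpace Ω} (μ : Measure Ω)
    (f : Ω × Ω → ℝ) : ℝ :=
  ∫ z, cellAverage m μ f z ^ 2 ∂μ.prod μ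

lemma measurableSpace_prod_mono {m m' : MeasurableSpace Ω} (h : m ≤ m') : m.prod m ≤ m'.prod m' :=
  sup_le_sup (MeasurableSpace.comap_mono h) (MeasurableSpace.comap_mono h)

lemma energy_nonneg : 0 ≤ energy m μ f := integral_nonneg fun _ => sq_nonneg _

lemma energy_le_integral_sq [IsProbabilityMeasure μ] (hm : m ≤ m₀) (hf : MemLp f 2 (μ.prod μ)) :
    energy m μ f ≤ ∫ z, f z ^ 2 ∂μ.prod μ :=
  integral_condExp_sq_le (measurableSpace_prod_mono hm) hf

-- The letter `a` records membership in two sets that nearly attain the cut norm of the error.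
lemma exists_letter_sq_cutNormOn_le [IsProbabilityMeasure μ] (hf : MemLp f 2 (μ.prod μ)) :
    ∃ a : Ω → Bool × Bool, Measurable a ∧ ∀ m' ≤ m₀, m ≤ m' → Measurable[m'] a →
      cutNormOn μ (f - cellAverage m μ f) ^ 2 ≤ 4 * (energy m' μ f - energy m μ f) := by
  classical
  obtain ⟨A, B, hA, hB, hAB⟩ := exists_cutNormOn_le_two_mul μ (f - cellAverage m μ f)
  set error := ∫ z in A ×ˢ B, (f - cellAverage m μ f) z ∂μ.prod μ
  refine ⟨fun x => (decide (x ∈ A), decide (x ∈ B)),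
    (measurable_to_bool (by simpa [preimage] using hA)).prodMk
      (measurable_to_bool (by simpa [preimage] using hB)), fun m' hm' hm ha => ?_⟩
  have hA' : MeasurableSet[m'] A := by
    simpa [preimage] using (measurable_fst.comp ha) (measurableSet_singleton true)
  have hB' : MeasurableSet[m'] B := by
    simpa [preimage] using (measurable_snd.comp ha) (measurableSet_singleton true)
  have henergy := sq_setIntegral_sub_condExp_le (measurableSpace_prod_mono hm)
    (measurableSpace_prod_mono hm') hf (hA'.prod hB')
  calc cutNormOn μ (f - cellAverage m μ f) ^ 2
      ≤ (2 * |error|) ^ 2 := pow_le_pow_left₀ cutNormOn_nonneg hAB 2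
    _ = 4 * error ^ 2 := by rw [mul_pow, sq_abs]; norm_num
    _ ≤ 4 * (energy m' μ f - energy m μ f) := by gcongr; exact henergy

lemma exists_seq_forall_prefix {α : Type*} {P : ∀ j : ℕ, (Fin j → α) → α → Prop}
    (h : ∀ j v, ∃ a, P j v a) : ∃ u : ℕ → α, ∀ j, P j (fun i => u i) (u j) := by
  choose next hnext using h
  let u : ℕ → α := Nat.strongRec fun j prev => next j fun i => prev i i.2
  refine ⟨u, fun j => ?_⟩
  have hu : u j = next j fun i => u i := Nat.strongRec_eq _ j
  exact hu ▸ hnext j _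

end Regularity

/-- Infinite codes: a color followed by a sequence of letters, each of which records membership in
two sets. -/
abbrev Code (S : Type*) : Type _ := S × (ℕ → Bool × Bool)

/-- Codes truncated after `j` letters. They index the classes of a finite partition. -/
abbrev Word (S : Type*) (j : ℕ) : Type _ := S × (Fin j → Bool × Bool)

section Code

variable {S : Type*}

/-- The first `j` letters of a code, together with its color. -/
def truncate (j : ℕ) (x : Code S) : Word S j := (x.1, fun i => x.2 i)

variable [MeasurableSpace S]

lemma measurable_truncate (j : ℕ) : Measurable (truncate (S := S) j) := by
  unfold truncate
  fun_prop

/-- The σ-algebra of sets of codes that depend on the color and the first `j` letters only. -/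
abbrev truncateSigma (S : Type*) [MeasurableSpace S] (j : ℕ) : MeasurableSpace (Code S) :=
  MeasurableSpace.comap (truncate j) inferInstance

lemma truncateSigma_le (j : ℕ) : truncateSigma S j ≤ (inferInstance : MeasurableSpace (Code S)) :=
  (measurable_truncate j).comap_le

lemma measurable_fst_truncateSigma (j : ℕ) :
    Measurable[truncateSigma S j] (Prod.fst : Code S → S) :=
  (measurable_fst : Measurable (Prod.fst : Word S j → S)).comp (comap_measurable (truncate j))

lemma measurable_letter_truncateSigma (j : ℕ) :
    Measurable[truncateSigma S (j + 1)] fun x : Code S => x.2 j :=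
  (by fun_prop : Measurable fun v : Word S (j + 1) => v.2 (Fin.last j)).comp
    (comap_measurable (truncate (j + 1)))

lemma truncateSigma_mono : Monotone (truncateSigma S) := by
  intro j k hjk
  have hfactor : Measurable fun w : Word S k =>
      ((w.1, fun i => w.2 (i.castLE hjk)) : Word S j) := by
    fun_prop
  exact MeasurableSpace.comap_le_iff_le_map.2 fun s hs => ⟨_, hfactor hs, rfl⟩

variable {Ω : Type*} {m₀ : MeasurableSpace Ω} {μ : Measure Ω} [IsProbabilityMeasure μ]
  {f : Ω × Ω → ℝ}

theorem exists_code_sum_sq_cutNormOn_le (hf : MemLp f 2 (μ.prod μ)) {c : Ω → S}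
    (hc : Measurable c) :
    ∃ R : Ω → Code S, Measurable R ∧ (∀ x, (R x).1 = c x) ∧ ∀ J, ∑ j ∈ Finset.range J,
      cutNormOn μ (f - cellAverage ((truncateSigma S j).comap R) μ f) ^ 2 ≤
        4 * ∫ z, f z ^ 2 ∂μ.prod μ := by
  obtain ⟨u, hu⟩ := exists_seq_forall_prefix fun j (v : Fin j → Ω → Bool × Bool) =>
    exists_letter_sq_cutNormOn_le hf
      (m := MeasurableSpace.comap (fun x => ((c x, fun i => v i x) : Word S j)) inferInstance)
  set R : Ω → Code S := fun x => (c x, fun i => u i x)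
  have hR : Measurable R := hc.prodMk (measurable_pi_lambda _ fun i => (hu i).1)
  set σ : ℕ → MeasurableSpace Ω := fun j => (truncateSigma S j).comap R
  have hσ_le : ∀ j, σ j ≤ m₀ := fun j =>
    (MeasurableSpace.comap_mono (truncateSigma_le j)).trans hR.comap_le
  have hletter : ∀ j, Measurable[σ (j + 1)] (u j) := fun j =>
    (measurable_letter_truncateSigma j).comp (comap_measurable R)
  have hstep : ∀ j, cutNormOn μ (f - cellAverage (σ j) μ f) ^ 2 ≤
      4 * (energy (σ (j + 1)) μ f - energy (σ j) μ f) := fun j => by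
    have hcomap : σ j = MeasurableSpace.comap (truncate j ∘ R) inferInstance :=
      MeasurableSpace.comap_comp
    have hmono : σ j ≤ σ (j + 1) := MeasurableSpace.comap_mono (truncateSigma_mono j.le_succ)
    rw [hcomap] at hmono ⊢
    exact (hu j).2 (σ (j + 1)) (hσ_le _) hmono (hletter j)
  refine ⟨R, hR, fun x => rfl, fun J => (Finset.sum_le_sum fun j _ => hstep j).trans ?_⟩
  rw [← Finset.mul_sum, Finset.sum_range_sub fun j => energy (σ j) μ f]
  have hle := energy_le_integral_sq (hσ_le J) hf
  have hnonneg := energy_nonneg (m := σ 0) (μ := μ) (f := f)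
  linarith

end Code

/-! ### Averages over finite labellings -/

section FiniteLabels

variable {Ω ι : Type*} [MeasurableSpace Ω] {μ : Measure Ω} [MeasurableSpace ι]
  [MeasurableSingletonClass ι] {p : Ω → ι} {f : Ω → ℝ}

lemma setIntegral_fiber_comp (hp : Measurable p) (g : ι → ℝ) (i : ι) :
    ∫ x in p ⁻¹' {i}, g (p x) ∂μ = g i * μ.real (p ⁻¹' {i}) := by
  rw [setIntegral_congr_fun (hp (measurableSet_singleton i)) fun x (hx : p x = i) =>
    congrArg g hx, setIntegral_const, smul_eq_mul, mul_comm]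

variable [IsFiniteMeasure μ]

lemma integrable_comp_of_finite [Finite ι] (hp : Measurable p) (g : ι → ℝ) :
    Integrable (fun x => g (p x)) μ :=
  (Integrable.of_finite (f := g) (μ := μ.map p)).comp_measurable hp

variable [Fintype ι]

lemma integral_comp_eq_sum (hp : Measurable p) (g : ι → ℝ) :
    ∫ x, g (p x) ∂μ = ∑ i, g i * μ.real (p ⁻¹' {i}) := by
  rw [← integral_map hp.aemeasurable (f := g) (measurable_of_finite g).aestronglyMeasurable,
    integral_fintype .of_finite]
  exact Finset.sum_congr rfl fun i _ => by
    rw [map_measureReal_apply hp (measurableSet_singleton i), smul_eq_mul, mul_comm]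

theorem integral_abs_condExp_comap_sub_comp (hp : Measurable p) (hf : Integrable f μ) (g : ι → ℝ) :
    ∫ x, |(μ[f | MeasurableSpace.comap p inferInstance]) x - g (p x)| ∂μ =
      ∑ i, |∫ x in p ⁻¹' {i}, f x ∂μ - g i * μ.real (p ⁻¹' {i})| := by
  obtain ⟨h, -, hh⟩ := (stronglyMeasurable_condExp (f := f) (μ := μ)
    (m := MeasurableSpace.comap p inferInstance)).exists_eq_measurable_comp
  have hfiber : ∀ i, ∫ x in p ⁻¹' {i}, f x ∂μ = h i * μ.real (p ⁻¹' {i}) := fun i => by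
    rw [← setIntegral_condExp hp.comap_le hf ⟨{i}, measurableSet_singleton i, rfl⟩, hh]
    exact setIntegral_fiber_comp hp h i
  simp only [hh, Function.comp_apply]
  rw [integral_comp_eq_sum hp fun i => |h i - g i|]
  refine Finset.sum_congr rfl fun i _ => ?_
  rw [hfiber, ← sub_mul, abs_mul, abs_of_nonneg measureReal_nonneg]

end FiniteLabels

lemma comap_prodMap {α β : Type*} (m : MeasurableSpace β) (p : α → β) :
    (m.prod m).comap (Prod.map p p) = (m.comap p).prod (m.comap p) := by
  simp only [MeasurableSpace.prod, MeasurableSpace.comap_sup, MeasurableSpace.comap_comp]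
  rfl

/-! ### Weak limits of kernels -/

lemma exists_density_of_unitInterval {α : Type*} [MeasurableSpace α]
    (ρ : Measure (α × unitInterval)) [IsFiniteMeasure ρ] :
    ∃ w : α → ℝ, Measurable w ∧ (∀ z, w z ∈ Icc (0 : ℝ) 1) ∧ ∀ s, MeasurableSet s →
      ∫ z in s, w z ∂ρ.fst = ∫ p in s ×ˢ univ, (p.2 : ℝ) ∂ρ := by
  refine ⟨fun z => ∫ t : unitInterval, (t : ℝ) ∂ρ.condKernel z, ?_, fun z => ⟨?_, ?_⟩,
    fun s hs => ?_⟩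
  · exact (measurable_subtype_coe.stronglyMeasurable.integral_kernel (κ := ρ.condKernel)).measurable
  · exact integral_nonneg fun t => t.2.1
  · calc ∫ t : unitInterval, (t : ℝ) ∂ρ.condKernel z
        ≤ ∫ _ : unitInterval, (1 : ℝ) ∂ρ.condKernel z :=
          integral_mono_of_nonneg (.of_forall fun t => t.2.1) (integrable_const 1)
            (.of_forall fun t => t.2.2)
      _ = 1 := by simp
  · refine Measure.setIntegral_condKernel_univ_right (f := fun p : α × unitInterval => (p.2 : ℝ))
      hs (Integrable.integrableOn ?_)
    exact .of_mem_Icc 0 1 (by fun_prop) (.of_forall fun p => p.2.2)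

lemma exists_symm_setIntegral_eq {α : Type*} [MeasurableSpace α] {μ : Measure α}
    [IsFiniteMeasure μ] {w : α × α → ℝ} (hw : Measurable w) (hw01 : ∀ z, w z ∈ Icc (0 : ℝ) 1) :
    ∃ v : α × α → ℝ, Measurable v ∧ (∀ z, v z ∈ Icc (0 : ℝ) 1) ∧ (∀ z, v z.swap = v z) ∧
      ∀ A B, ∫ z in A ×ˢ B, w z ∂μ.prod μ = ∫ z in B ×ˢ A, w z ∂μ.prod μ →
        ∫ z in A ×ˢ B, v z ∂μ.prod μ = ∫ z in A ×ˢ B, w z ∂μ.prod μ := by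
  refine ⟨fun z => (w z + w z.swap) / 2, by fun_prop, fun z => ?_, fun z => ?_, fun A B hAB => ?_⟩
  · constructor <;> linarith [(hw01 z).1, (hw01 z).2, (hw01 z.swap).1, (hw01 z.swap).2]
  · simp only [Prod.swap_swap, add_comm]
  · have hint : Integrable w (μ.prod μ) := .of_mem_Icc 0 1 hw.aemeasurable (.of_forall hw01)
    have hswap : Integrable (fun z => w z.swap) (μ.prod μ) := hint.swap
    rw [integral_div, integral_add hint.integrableOn hswap.integrableOn, setIntegral_prod_swap,
      ← hAB, add_self_div_two]

section WeakConvergence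

variable {X : Type*} [TopologicalSpace X] [CompactSpace X] [MeasurableSpace X]
  [OpensMeasurableSpace X]

lemma tendsto_setIntegral_of_isClopen {ν : ℕ → ProbabilityMeasure X} {ν₀ : ProbabilityMeasure X}
    (hν : Tendsto ν atTop (nhds ν₀)) {s : Set X} (hs : IsClopen s) {g : X → ℝ}
    (hg : Continuous g) :
    Tendsto (fun n => ∫ x in s, g x ∂(ν n : Measure X)) atTop (nhds (∫ x in s, g x ∂ν₀)) := by
  simpa [integral_indicator hs.isOpen.measurableSet] using
    ProbabilityMeasure.tendsto_iff_forall_integral_tendsto.1 hν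
      (.mkOfCompact ⟨s.indicator g, hs.continuous_indicator hg⟩)

lemma tendsto_measureReal_of_isClopen {ν : ℕ → ProbabilityMeasure X} {ν₀ : ProbabilityMeasure X}
    (hν : Tendsto ν atTop (nhds ν₀)) {s : Set X} (hs : IsClopen s) :
    Tendsto (fun n => (ν n : Measure X).real s) atTop (nhds ((ν₀ : Measure X).real s)) := by
  simpa using tendsto_setIntegral_of_isClopen hν hs (g := fun _ => 1) continuous_const

end WeakConvergence

section KernelLaw

variable {Ω X : Type*} [MeasurableSpace Ω] [MeasurableSpace X] (P : ProbabilityMeasure Ω)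
  {R : Ω → X} (hR : Measurable R) {f : Ω × Ω → unitInterval} (hf : Measurable f)

/-- The joint law of the labels of two independent points and of the value of a kernel at this
pair of points. -/
def kernelLaw : ProbabilityMeasure ((X × X) × unitInterval) :=
  (P.prod P).map ((hR.prodMap hR).prodMk hf).aemeasurable

lemma map_fst_kernelLaw :
    (kernelLaw P hR hf).map measurable_fst.aemeasurable =
      (P.map hR.aemeasurable).prod (P.map hR.aemeasurable) := by
  rw [ProbabilityMeasure.map_prod_map _ _ hR hR, kernelLaw]
  exact Subtype.ext (Measure.map_map measurable_fst ((hR.prodMap hR).prodMk hf))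

lemma setIntegral_kernelLaw {s : Set (X × X)} (hs : MeasurableSet s) :
    ∫ p in s ×ˢ univ, (p.2 : ℝ) ∂(kernelLaw P hR hf : Measure ((X × X) × unitInterval)) =
      ∫ z in Prod.map R R ⁻¹' s, (f z : ℝ) ∂(P : Measure Ω).prod P := by
  rw [kernelLaw, ProbabilityMeasure.toMeasure_map, setIntegral_map (hs.prod .univ) (by fun_prop)
    (by fun_prop), ProbabilityMeasure.toMeasure_prod, mk_preimage_prod, preimage_univ, inter_univ]

end KernelLaw

section Compactness

variable {Ω X : Type*} [MeasurableSpace Ω] [TopologicalSpace X] [CompactSpace X]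
  [TopologicalSpace.MetrizableSpace X] [MeasurableSpace X] [BorelSpace X]
  (P : ProbabilityMeasure Ω) {R : ℕ → Ω → X} {f : ℕ → Ω × Ω → unitInterval}

lemma exists_subseq_tendsto_kernelLaw (hR : ∀ n, Measurable (R n)) (hf : ∀ n, Measurable (f n)) :
    ∃ (φ : ℕ → ℕ) (μ : ProbabilityMeasure X) (ρ : ProbabilityMeasure ((X × X) × unitInterval)),
      StrictMono φ ∧ Tendsto (fun n => P.map (hR (φ n)).aemeasurable) atTop (nhds μ) ∧
      Tendsto (fun n => kernelLaw P (hR (φ n)) (hf (φ n))) atTop (nhds ρ) ∧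
      (ρ : Measure ((X × X) × unitInterval)).fst = (μ : Measure X).prod μ := by
  obtain ⟨⟨μ, ρ⟩, φ, hφ, hlim⟩ := CompactSpace.tendsto_subseq
    fun n => (P.map (hR n).aemeasurable, kernelLaw P (hR n) (hf n))
  obtain ⟨hμ, hρ⟩ := (Prod.tendsto_iff _ _).1 hlim
  have hprod : Tendsto (fun n => (P.map (hR (φ n)).aemeasurable).prod
      (P.map (hR (φ n)).aemeasurable)) atTop (nhds (μ.prod μ)) :=
    (ProbabilityMeasure.continuous_prod.tendsto (μ, μ)).comp (hμ.prodMk_nhds hμ)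
  have hfst : ρ.map measurable_fst.aemeasurable = μ.prod μ :=
    tendsto_nhds_unique (((ProbabilityMeasure.continuous_map continuous_fst).tendsto ρ).comp hρ)
      (hprod.congr fun n => (map_fst_kernelLaw P (hR (φ n)) (hf (φ n))).symm)
  exact ⟨φ, μ, ρ, hφ, hμ, hρ, congrArg Subtype.val hfst⟩

theorem exists_subseq_tendsto_setIntegral_isClopen (hR : ∀ n, Measurable (R n))
    (hf : ∀ n, Measurable (f n)) (hsymm : ∀ n z, f n z.swap = f n z) :
    ∃ (φ : ℕ → ℕ) (μ : ProbabilityMeasure X) (w : X × X → ℝ), StrictMono φ ∧ Measurable w ∧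
      (∀ z, w z ∈ Icc (0 : ℝ) 1) ∧ (∀ z, w z.swap = w z) ∧
      (∀ A, IsClopen A → Tendsto (fun n => (P : Measure Ω).real (R (φ n) ⁻¹' A)) atTop
        (nhds ((μ : Measure X).real A))) ∧
      ∀ A B, IsClopen A → IsClopen B →
        Tendsto (fun n => ∫ z in (R (φ n) ⁻¹' A) ×ˢ (R (φ n) ⁻¹' B), (f (φ n) z : ℝ)
          ∂(P : Measure Ω).prod P) atTop (nhds (∫ z in A ×ˢ B, w z ∂(μ : Measure X).prod μ)) := by
  obtain ⟨φ, μ, ρ, hφ, hμ, hρ, hfst⟩ := exists_subseq_tendsto_kernelLaw P hR hf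
  obtain ⟨w, hw, hw01, hwint⟩ :=
    exists_density_of_unitInterval (ρ : Measure ((X × X) × unitInterval))
  have hlim : ∀ A B, IsClopen A → IsClopen B →
      Tendsto (fun n => ∫ z in (R (φ n) ⁻¹' A) ×ˢ (R (φ n) ⁻¹' B), (f (φ n) z : ℝ)
        ∂(P : Measure Ω).prod P) atTop (nhds (∫ z in A ×ˢ B, w z ∂(μ : Measure X).prod μ)) := by
    intro A B hA hB
    have hAB : MeasurableSet (A ×ˢ B) := hA.isOpen.measurableSet.prod hB.isOpen.measurableSet
    rw [← hfst, hwint _ hAB]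
    refine (tendsto_setIntegral_of_isClopen hρ ((hA.prod hB).prod isClopen_univ)
      (by fun_prop : Continuous fun p : (X × X) × unitInterval => (p.2 : ℝ))).congr fun n => ?_
    exact setIntegral_kernelLaw P (hR _) (hf _) hAB
  obtain ⟨v, hv, hv_mem, hv_symm, hv_int⟩ :=
    exists_symm_setIntegral_eq (μ := (μ : Measure X)) hw hw01
  refine ⟨φ, μ, v, hφ, hv, hv_mem, hv_symm, fun A hA => ?_, fun A B hA hB => ?_⟩
  · refine (tendsto_measureReal_of_isClopen hμ hA).congr fun n => ?_
    exact map_measureReal_apply (hR _) hA.isOpen.measurableSet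
  · rw [hv_int A B (tendsto_nhds_unique (hlim A B hA hB) ((hlim B A hB hA).congr fun n => ?_))]
    · exact hlim A B hA hB
    · simp only [← setIntegral_prod_swap (R (φ n) ⁻¹' A), hsymm]

end Compactness

lemma exists_subseq_tendsto_of_sum_sq_le {d : ℕ → ℕ → ℝ} {C : ℝ}
    (hd : ∀ n J, ∑ j ∈ Finset.range J, d n j ^ 2 ≤ C) :
    ∃ (φ : ℕ → ℕ) (δ : ℕ → ℝ), StrictMono φ ∧
      (∀ j, Tendsto (fun n => d (φ n) j) atTop (nhds (δ j))) ∧ Tendsto δ atTop (nhds 0) := by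
  have hmem : ∀ n, d n ∈ univ.pi fun _ => Icc (-√C) √C := fun n j _ => by
    refine abs_le.1 (Real.abs_le_sqrt ?_)
    exact (Finset.single_le_sum (fun i _ => sq_nonneg (d n i)) (Finset.self_mem_range_succ j)).trans
      (hd n (j + 1))
  obtain ⟨δ, -, φ, hφ, hlim⟩ :=
    (isCompact_univ_pi fun _ => isCompact_Icc).tendsto_subseq hmem
  rw [tendsto_pi_nhds] at hlim
  have hsum : ∀ J, ∑ j ∈ Finset.range J, δ j ^ 2 ≤ C := fun J =>
    le_of_tendsto (tendsto_finsetSum _ fun j _ => (hlim j).pow 2) (.of_forall fun n => hd (φ n) J)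
  have hsq : Tendsto (fun j => δ j ^ 2) atTop (nhds 0) :=
    (summable_of_sum_range_le (fun j => sq_nonneg (δ j)) hsum).tendsto_atTop_zero
  have habs : Tendsto (fun j => |δ j|) atTop (nhds 0) := by
    simpa only [Real.sqrt_sq_eq_abs, Real.sqrt_zero] using hsq.sqrt
  exact ⟨φ, δ, hφ, hlim, (tendsto_zero_iff_abs_tendsto_zero δ).2 habs⟩

lemma exists_measurable_map_unitMeasure_eq {Y : Type*} [MeasurableSpace Y] [StandardBorelSpace Y]
    (μ : Measure Y) [IsProbabilityMeasure μ] :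
    ∃ ψ : ℝ → Y, Measurable ψ ∧ unitMeasure.map ψ = μ := by
  have := μ.nonempty_of_neZero
  obtain ⟨g, hg, hgμ⟩ := μ.exists_measurable_map_eq
  refine ⟨g ∘ projIcc 0 1 zero_le_one, by fun_prop, ?_⟩
  have hcoe : unitMeasure = (volume : Measure unitInterval).map (↑) :=
    unitInterval.measurePreserving_coe.map_eq.symm
  rw [hcoe, Measure.map_map (by fun_prop) measurable_subtype_coe, ← hgμ]
  congr 1 with t
  simp

lemma tendsto_integral_abs_cellAverage_sub {Ω : Type*} {m₀ : MeasurableSpace Ω} {μ : Measure Ω}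
    [IsFiniteMeasure μ] {m : ℕ → MeasurableSpace Ω} (hmono : Monotone m) (hle : ∀ j, m j ≤ m₀)
    {w : Ω × Ω → ℝ} (hw : Measurable[(⨆ j, m j).prod (⨆ j, m j)] w)
    (hint : Integrable w (μ.prod μ)) :
    Tendsto (fun j => ∫ z, |cellAverage (m j) μ w z - w z| ∂μ.prod μ) atTop (nhds 0) := by
  let ℱ : Filtration ℕ (m₀.prod m₀) :=
    ⟨fun j => (m j).prod (m j), fun i j hij => measurableSpace_prod_mono (hmono hij),
      fun j => measurableSpace_prod_mono (hle j)⟩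
  have hprod : ⨆ j, ℱ j = (⨆ j, m j).prod (⨆ j, m j) := by
    simp only [MeasurableSpace.prod, MeasurableSpace.comap_iSup, ← iSup_sup_eq]
    rfl
  have hlevy : Tendsto (fun j => eLpNorm (cellAverage (m j) μ w - w) 1 (μ.prod μ)) atTop (nhds 0) :=
    hint.tendsto_eLpNorm_condExp (ℱ := ℱ) (by rw [hprod]; exact hw.stronglyMeasurable)
  refine ((ENNReal.tendsto_toReal ENNReal.zero_ne_top).comp hlevy).congr fun j => ?_
  have hmeas : AEStronglyMeasurable (cellAverage (m j) μ w - w) (μ.prod μ) :=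
    (integrable_condExp.sub hint).aestronglyMeasurable
  rw [Function.comp_apply, eLpNorm_one_eq_lintegral_enorm,
    ← integral_norm_eq_lintegral_enorm hmeas]
  rfl

lemma iSup_truncateSigma (S : Type*) [MeasurableSpace S] :
    ⨆ j, truncateSigma S j = (inferInstance : MeasurableSpace (Code S)) := by
  refine le_antisymm (iSup_le truncateSigma_le) (sup_le ?_ ?_)
  · have hcolor : Measurable[⨆ j, truncateSigma S j] (Prod.fst : Code S → S) :=
      (measurable_fst_truncateSigma 0).mono (le_iSup (truncateSigma S) 0) le_rfl
    exact hcolor.comap_le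
  · have hletters : Measurable[⨆ j, truncateSigma S j] (Prod.snd : Code S → ℕ → Bool × Bool) :=
      @measurable_pi_lambda _ _ _ (_) _ _ fun i =>
        (measurable_letter_truncateSigma i).mono (le_iSup (truncateSigma S) (i + 1)) le_rfl
    exact hletters.comap_le

/-! ### Estimates for the colored cut distance -/

section ColoredCutDistance

variable {S : Type*} [Fintype S]

lemma colorDist_nonneg (c c' : ℝ → S) : 0 ≤ colorDist c c' :=
  Finset.sum_nonneg fun _ _ => ENNReal.toReal_nonneg

lemma cutNorm_nonneg (U : ℝ → ℝ → ℝ) : 0 ≤ cutNorm U :=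
  Real.sSup_nonneg (by rintro _ ⟨A, B, -, -, -, -, rfl⟩; exact abs_nonneg _)

lemma deltaCutS_nonneg (W W' : CGraphon S) : 0 ≤ deltaCutS W W' :=
  Real.sInf_nonneg (by
    rintro _ ⟨σ, -, rfl⟩
    exact add_nonneg (cutNorm_nonneg _) (colorDist_nonneg _ _))

lemma deltaCutS_le (W W' : CGraphon S) {σ : ℝ → ℝ} (hσ : IsMPB σ) :
    deltaCutS W W' ≤ cutNorm (fun x y => W.K.W x y - W'.K.W (σ x) (σ y)) +
      colorDist W.c fun y => W'.c (σ y) :=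
  csInf_le ⟨0, by
    rintro _ ⟨σ, -, rfl⟩
    exact add_nonneg (cutNorm_nonneg _) (colorDist_nonneg _ _)⟩ ⟨σ, hσ, rfl⟩

lemma colorDist_le_card_mul (c c' : ℝ → S) :
    colorDist c c' ≤ Fintype.card S * unitMeasure.real {x | c x ≠ c' x} := by
  have hclass : ∀ s : S, (volume ((I01 ∩ c ⁻¹' {s}) ∆ (I01 ∩ c' ⁻¹' {s}))).toReal ≤
      unitMeasure.real {x | c x ≠ c' x} := fun s => by
    have hsub : (I01 ∩ c ⁻¹' {s}) ∆ (I01 ∩ c' ⁻¹' {s}) ⊆ {x | c x ≠ c' x} ∩ I01 := by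
      rintro x (⟨⟨hx, hcx⟩, hcx'⟩ | ⟨⟨hx, hcx⟩, hcx'⟩)
      · exact ⟨fun h => hcx' ⟨hx, h.symm.trans hcx⟩, hx⟩
      · exact ⟨fun h => hcx' ⟨hx, h.trans hcx⟩, hx⟩
    exact ENNReal.toReal_mono (measure_ne_top _ _)
      ((measure_mono hsub).trans (Measure.le_restrict_apply _ _))
  refine (Finset.sum_le_sum fun s _ => hclass s).trans_eq ?_
  rw [Finset.sum_const, Finset.card_univ, nsmul_eq_mul]

end ColoredCutDistance

lemma integral_abs_comp_prodMap_sub_le {Ω ι : Type*} [MeasurableSpace Ω] {μ : Measure Ω}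
    [IsProbabilityMeasure μ] [Finite ι] [MeasurableSpace ι] [MeasurableSingletonClass ι]
    {p q : Ω → ι} (hp : Measurable p) (hq : Measurable q) {G : ι × ι → ℝ} {C : ℝ}
    (hG : ∀ i, |G i| ≤ C) :
    ∫ z, |G (Prod.map p p z) - G (Prod.map q q z)| ∂μ.prod μ ≤ 4 * C * μ.real {x | p x ≠ q x} := by
  have hE : MeasurableSet {x | p x ≠ q x} := (measurableSet_eq_fun hp hq).compl
  set E : Ω → ℝ := {x | p x ≠ q x}.indicator 1
  have hE_int : Integrable E μ := (integrable_const 1).indicator hE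
  have hE_one : ∀ x, p x ≠ q x → E x = 1 := fun x hx => indicator_of_mem (s := {x | p x ≠ q x}) hx 1
  have hE_nonneg : ∀ x, 0 ≤ E x := fun x => indicator_nonneg (fun _ _ => zero_le_one) x
  have hpoint : ∀ z, |G (Prod.map p p z) - G (Prod.map q q z)| ≤ 2 * C * (E z.1 + E z.2) := by
    intro z
    have hC : 0 ≤ C := (abs_nonneg _).trans (hG (Prod.map p p z))
    have htwo : |G (Prod.map p p z) - G (Prod.map q q z)| ≤ 2 * C :=
      (abs_sub _ _).trans (by linarith [hG (Prod.map p p z), hG (Prod.map q q z)])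
    by_cases h : p z.1 = q z.1 ∧ p z.2 = q z.2
    · rw [Prod.map_apply', Prod.map_apply', h.1, h.2, sub_self, abs_zero]
      exact mul_nonneg (by positivity) (add_nonneg (hE_nonneg _) (hE_nonneg _))
    · have hone : 1 ≤ E z.1 + E z.2 := by
        rcases not_and_or.1 h with h | h
        · linarith [hE_one _ h, hE_nonneg z.2]
        · linarith [hE_one _ h, hE_nonneg z.1]
      exact htwo.trans (le_mul_of_one_le_right (by positivity) hone)
  calc ∫ z, |G (Prod.map p p z) - G (Prod.map q q z)| ∂μ.prod μ
      ≤ ∫ z, 2 * C * (E z.1 + E z.2) ∂μ.prod μ :=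
        integral_mono_of_nonneg (.of_forall fun _ => abs_nonneg _)
          (((hE_int.comp_fst μ).add (hE_int.comp_snd μ)).const_mul _) (.of_forall hpoint)
    _ = 4 * C * μ.real {x | p x ≠ q x} := by
        rw [integral_const_mul, integral_add (hE_int.comp_fst μ) (hE_int.comp_snd μ),
          integral_fun_fst, integral_fun_snd, integral_indicator_one hE]
        simp only [probReal_univ, one_smul]
        ring

lemma Graphon.integrable (U : Graphon) :
    Integrable (Function.uncurry U.W) (unitMeasure.prod unitMeasure) :=
  .of_mem_Icc 0 1 U.measurable.aemeasurable (.of_forall fun _ => ⟨U.nonneg _ _, U.le_one _ _⟩)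

lemma integral_abs_sub_le_add {α : Type*} [MeasurableSpace α] {μ : Measure α} {f g h : α → ℝ}
    (hf : Integrable f μ) (hg : Integrable g μ) (hh : Integrable h μ) :
    ∫ x, |f x - h x| ∂μ ≤ ∫ x, |f x - g x| ∂μ + ∫ x, |g x - h x| ∂μ := by
  have hfg : Integrable (fun x => |f x - g x|) μ := (hf.sub hg).abs
  have hgh : Integrable (fun x => |g x - h x|) μ := (hg.sub hh).abs
  rw [← integral_add hfg hgh]
  exact integral_mono (hf.sub hh).abs (hfg.add hgh) fun x => abs_sub_le _ _ _

lemma integral_comp_of_measurePreserving {α β : Type*} [MeasurableSpace α] [MeasurableSpace β]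
    {μ : Measure α} {ν : Measure β} {T : α → β} (hT : MeasurePreserving T μ ν) {g : β → ℝ}
    (hg : Measurable g) : ∫ x, g (T x) ∂μ = ∫ y, g y ∂ν := by
  rw [← hT.map_eq, integral_map hT.aemeasurable hg.aestronglyMeasurable]

section LabelEstimate

variable {Ω ι : Type*} [MeasurableSpace Ω] [Fintype ι] [MeasurableSpace ι]

/-- The `L¹` distance between the average of a kernel `f` over the cells of a labelling `p` and the
step kernel with values `G` on these cells, expressed through the cell integrals of `f`. -/
def stepDeviation (μ : Measure Ω) (p : Ω → ι) (f : Ω × Ω → ℝ) (G : ι × ι → ℝ) : ℝ :=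
  ∑ i, |∫ z in Prod.map p p ⁻¹' {i}, f z ∂μ.prod μ -
    G i * (μ.prod μ).real (Prod.map p p ⁻¹' {i})|

variable [MeasurableSingletonClass ι]

lemma integral_abs_cellAverage_comap_sub {μ : Measure Ω} [IsFiniteMeasure μ] {p : Ω → ι}
    (hp : Measurable p) {f : Ω × Ω → ℝ} (hf : Integrable f (μ.prod μ)) (G : ι × ι → ℝ) :
    ∫ z, |cellAverage (MeasurableSpace.comap p inferInstance) μ f z - G (Prod.map p p z)|
      ∂μ.prod μ = stepDeviation μ p f G := by
  rw [stepDeviation, ← integral_abs_condExp_comap_sub_comp (hp.prodMap hp) hf, cellAverage,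
    ← comap_prodMap]
  rfl

variable {G : ι × ι → ℝ} {C : ℝ}

lemma integral_abs_cellAverage_comap_sub_comp_le {μ : Measure Ω} [IsProbabilityMeasure μ]
    {p q : Ω → ι} (hp : Measurable p) (hq : Measurable q) {f g : Ω × Ω → ℝ}
    (hf : Integrable f (μ.prod μ)) (hg : Measurable g) (hg_int : Integrable g (μ.prod μ))
    (hG : ∀ i, |G i| ≤ C) {σ : Ω → Ω} (hσ : MeasurePreserving σ μ μ) :
    ∫ z, |cellAverage (MeasurableSpace.comap p inferInstance) μ f z - g (Prod.map σ σ z)|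
      ∂μ.prod μ ≤ stepDeviation μ p f G + 4 * C * μ.real {x | p x ≠ q (σ x)} +
        ∫ z, |G (Prod.map q q z) - g z| ∂μ.prod μ := by
  have hσσ : MeasurePreserving (Prod.map σ σ) (μ.prod μ) (μ.prod μ) := hσ.prod hσ
  have hqσ : Measurable (q ∘ σ) := hq.comp hσ.measurable
  have havg : Integrable (cellAverage (MeasurableSpace.comap p inferInstance) μ f) (μ.prod μ) :=
    integrable_condExp
  have hgσ : Integrable (fun z => g (Prod.map σ σ z)) (μ.prod μ) :=
    hσσ.integrable_comp_of_integrable hg_int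
  have hGp := integrable_comp_of_finite (μ := μ.prod μ) (hp.prodMap hp) G
  have hGqσ := integrable_comp_of_finite (μ := μ.prod μ) (hqσ.prodMap hqσ) G
  have hstep := integral_abs_cellAverage_comap_sub hp hf G
  have hmismatch : ∫ z, |G (Prod.map p p z) - G (Prod.map (q ∘ σ) (q ∘ σ) z)| ∂μ.prod μ ≤
      4 * C * μ.real {x | p x ≠ q (σ x)} := integral_abs_comp_prodMap_sub_le hp hqσ hG
  have htransport : ∫ z, |G (Prod.map (q ∘ σ) (q ∘ σ) z) - g (Prod.map σ σ z)| ∂μ.prod μ =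
      ∫ z, |G (Prod.map q q z) - g z| ∂μ.prod μ :=
    integral_comp_of_measurePreserving hσσ
      (((measurable_of_finite G).comp (hq.prodMap hq)).sub hg).abs
  linarith [integral_abs_sub_le_add havg hGp hgσ, integral_abs_sub_le_add hGp hGqσ hgσ]

variable {p q : ℝ → ι}

lemma cutNorm_sub_comp_le (U V : Graphon) (hp : Measurable p) (hq : Measurable q)
    (hG : ∀ i, |G i| ≤ C) {σ : ℝ → ℝ} (hσ : IsMPB σ) :
    cutNorm (fun x y => U.W x y - V.W (σ x) (σ y)) ≤
      cutNormOn unitMeasure (Function.uncurry U.W - cellAverage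
        (MeasurableSpace.comap p inferInstance) unitMeasure (Function.uncurry U.W)) +
      (stepDeviation unitMeasure p (Function.uncurry U.W) G +
      4 * C * unitMeasure.real {x | p x ≠ q (σ x)} +
      ∫ z, |G (Prod.map q q z) - Function.uncurry V.W z| ∂unitMeasure.prod unitMeasure) := by
  set f := Function.uncurry U.W
  set g := Function.uncurry V.W
  set avg := cellAverage (MeasurableSpace.comap p inferInstance) unitMeasure f
  have hgσ : Integrable (fun z => g (Prod.map σ σ z)) (unitMeasure.prod unitMeasure) :=
    (hσ.2.2.prod hσ.2.2).integrable_comp_of_integrable V.integrable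
  have hcancel : ∀ z, |Function.uncurry (fun x y => U.W x y - V.W (σ x) (σ y)) z - (f - avg) z| =
      |avg z - g (Prod.map σ σ z)| := fun z =>
    congrArg abs (sub_sub_sub_cancel_left (g (Prod.map σ σ z)) (avg z) (f z))
  have havg : Integrable avg (unitMeasure.prod unitMeasure) := integrable_condExp
  have hregular : cutNorm (fun x y => U.W x y - V.W (σ x) (σ y)) ≤ cutNormOn unitMeasure (f - avg) +
      ∫ z, |avg z - g (Prod.map σ σ z)| ∂unitMeasure.prod unitMeasure := by
    rw [← integral_congr_ae (.of_forall hcancel)]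
    exact cutNorm_le_cutNormOn_add (U.integrable.sub hgσ) (U.integrable.sub havg)
  exact hregular.trans (add_le_add le_rfl (integral_abs_cellAverage_comap_sub_comp_le hp hq
    U.integrable V.measurable V.integrable hG hσ.2.2))

theorem deltaCutS_le_of_labels {S : Type*} [Fintype S] (W W' : CGraphon S) (hp : Measurable p)
    (hq : Measurable q) (color : ι → S) (hcp : ∀ x, W.c x = color (p x))
    (hcq : ∀ x, W'.c x = color (q x)) (hG : ∀ i, |G i| ≤ C) :
    deltaCutS W W' ≤
      cutNormOn unitMeasure (Function.uncurry W.K.W - cellAverage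
        (MeasurableSpace.comap p inferInstance) unitMeasure (Function.uncurry W.K.W)) +
      stepDeviation unitMeasure p (Function.uncurry W.K.W) G +
      (4 * C + Fintype.card S) *
        ∑ a, |unitMeasure.real (p ⁻¹' {a}) - unitMeasure.real (q ⁻¹' {a})| +
      ∫ z, |G (Prod.map q q z) - Function.uncurry W'.K.W z| ∂unitMeasure.prod unitMeasure := by
  have hC : 0 ≤ C := (abs_nonneg _).trans (hG (p 0, p 0))
  have hK : 0 ≤ 4 * C + Fintype.card S := by positivity
  refine le_of_forall_pos_le_add fun ε hε => ?_
  obtain ⟨σ, hσ, hmatch⟩ := exists_isMPB_measureReal_ne_le hp hq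
    (show 0 < ε / (4 * C + Fintype.card S + 1) by positivity)
  have hcolor : colorDist W.c (fun y => W'.c (σ y)) ≤
      Fintype.card S * unitMeasure.real {x | p x ≠ q (σ x)} := by
    refine (colorDist_le_card_mul _ _).trans (mul_le_mul_of_nonneg_left ?_ (Nat.cast_nonneg _))
    refine measureReal_mono fun x (hx : W.c x ≠ W'.c (σ x)) hpq => hx ?_
    rw [hcp, hcq, hpq]
  have hε_bound : (4 * C + Fintype.card S) * (ε / (4 * C + Fintype.card S + 1)) ≤ ε := by
    rw [mul_div_assoc', div_le_iff₀ (by positivity)]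
    linarith
  linarith [deltaCutS_le W W' hσ, cutNorm_sub_comp_le W.K W'.K hp hq hG hσ, hcolor, hε_bound,
    mul_le_mul_of_nonneg_left hmatch hK]

end LabelEstimate

/-! ### Convergence of coded graphons -/

section StepKernel

variable {Ω Ω' ι : Type*} [MeasurableSpace Ω] [MeasurableSpace Ω']

lemma tendsto_stepDeviation [Fintype ι] {μ : Measure Ω} [SFinite μ] {ν : Measure Ω'} [SFinite ν]
    {p : ℕ → Ω → ι} {q : Ω' → ι} {f : ℕ → Ω × Ω → ℝ} {g : Ω' × Ω' → ℝ}
    (hmass : ∀ a, Tendsto (fun n => μ.real (p n ⁻¹' {a})) atTop (nhds (ν.real (q ⁻¹' {a}))))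
    (hcell : ∀ a b, Tendsto (fun n => ∫ z in (p n ⁻¹' {a}) ×ˢ (p n ⁻¹' {b}), f n z ∂μ.prod μ) atTop
      (nhds (∫ z in (q ⁻¹' {a}) ×ˢ (q ⁻¹' {b}), g z ∂ν.prod ν))) (G : ι × ι → ℝ) :
    Tendsto (fun n => stepDeviation μ (p n) (f n) G) atTop (nhds (stepDeviation ν q g G)) := by
  refine tendsto_finsetSum _ fun ⟨a, b⟩ _ => ?_
  simp only [← singleton_prod_singleton, preimage_prod_map_prod, measureReal_prod_prod]
  exact ((hcell a b).sub (((hmass a).mul (hmass b)).const_mul _)).abs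

lemma exists_cellAverage_comap_eq [MeasurableSpace ι] (p : Ω → ι) (μ : Measure Ω)
    (f : Ω × Ω → ℝ) : ∃ G : ι × ι → ℝ, ∀ z,
      cellAverage (MeasurableSpace.comap p inferInstance) μ f z = G (Prod.map p p z) := by
  have hcell : StronglyMeasurable[MeasurableSpace.comap (Prod.map p p) inferInstance]
      (cellAverage (MeasurableSpace.comap p inferInstance) μ f) := by
    have hcomap := comap_prodMap (inferInstance : MeasurableSpace ι) p
    rw [Prod.instMeasurableSpace, hcomap]
    exact stronglyMeasurable_condExp
  obtain ⟨G, -, hG⟩ := hcell.exists_eq_measurable_comp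
  exact ⟨G, congrFun hG⟩

end StepKernel

lemma tendsto_zero_of_le_double_limit {a : ℕ → ℝ} {b : ℕ → ℕ → ℝ} {B : ℕ → ℝ}
    (ha : ∀ n, 0 ≤ a n) (hab : ∀ j n, a n ≤ b j n)
    (hb : ∀ j, Tendsto (b j) atTop (nhds (B j))) (hB : Tendsto B atTop (nhds 0)) :
    Tendsto a atTop (nhds 0) := by
  refine tendsto_order.2 ⟨fun r hr => .of_forall fun n => hr.trans_le (ha n), fun ε hε => ?_⟩
  obtain ⟨j, hj⟩ := (hB.eventually_lt_const hε).exists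
  filter_upwards [(hb j).eventually_lt_const hj] with n hn using (hab j n).trans_lt hn

section CodeConvergence

variable {S : Type*} [TopologicalSpace S]

lemma continuous_truncate (j : ℕ) : Continuous (truncate (S := S) j) := by
  unfold truncate
  fun_prop

lemma isClopen_truncate_preimage_singleton [DiscreteTopology S] (j : ℕ) (a : Word S j) :
    IsClopen (truncate j ⁻¹' {a}) :=
  (isClopen_discrete {a}).preimage (continuous_truncate j)

/-- A measurable coding of the points of a colored graphon that records their color. -/
structure IsCode [MeasurableSpace S] (W : CGraphon S) (R : ℝ → Code S) : Prop where
  measurable : Measurable R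
  color : ∀ x, (R x).1 = W.c x

/-- The cut norm of the error made by averaging the kernel of `W` over the cells of depth `j`. -/
def regularityError [MeasurableSpace S] (W : CGraphon S) (R : ℝ → Code S) (j : ℕ) : ℝ :=
  cutNormOn unitMeasure (Function.uncurry W.K.W -
    cellAverage ((truncateSigma S j).comap R) unitMeasure (Function.uncurry W.K.W))

/-- Convergence of coded colored graphons: the masses of clopen sets of codes converge, and so do
the integrals of the kernels over products of such sets. -/
structure CodesTendsto (W : ℕ → CGraphon S) (R : ℕ → ℝ → Code S) (W₀ : CGraphon S)
    (ψ : ℝ → Code S) : Prop where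
  mass : ∀ A, IsClopen A → Tendsto (fun n => unitMeasure.real (R n ⁻¹' A)) atTop
    (nhds (unitMeasure.real (ψ ⁻¹' A)))
  integral : ∀ A B, IsClopen A → IsClopen B →
    Tendsto (fun n => ∫ z in (R n ⁻¹' A) ×ˢ (R n ⁻¹' B), Function.uncurry (W n).K.W z
      ∂unitMeasure.prod unitMeasure) atTop
    (nhds (∫ z in (ψ ⁻¹' A) ×ˢ (ψ ⁻¹' B), Function.uncurry W₀.K.W z
      ∂unitMeasure.prod unitMeasure))

variable [DiscreteTopology S] [Fintype S] [MeasurableSpace S] [MeasurableSingletonClass S]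
  {W : ℕ → CGraphon S} {W₀ : CGraphon S} {R : ℕ → ℝ → Code S} {ψ : ℝ → Code S}

-- At a fixed depth `j` the labels are matched up to `o(1)`, so what survives as `n → ∞` is the
-- regularity error `δ` and the error of averaging `W₀` over its own cells.
lemma exists_deltaCutS_le_tendsto (hR : ∀ n, IsCode (W n) (R n)) (hψ : IsCode W₀ ψ)
    (hlim : CodesTendsto W R W₀ ψ) {j : ℕ} {δ : ℝ}
    (hδ : Tendsto (fun n => regularityError (W n) (R n) j) atTop (nhds δ)) :
    ∃ b : ℕ → ℝ, (∀ n, deltaCutS (W n) W₀ ≤ b n) ∧ Tendsto b atTop (nhds (δ +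
      ∫ z, |cellAverage ((truncateSigma S j).comap ψ) unitMeasure (Function.uncurry W₀.K.W) z -
        Function.uncurry W₀.K.W z| ∂unitMeasure.prod unitMeasure)) := by
  simp only [regularityError, truncateSigma, MeasurableSpace.comap_comp] at hδ ⊢
  have hp : ∀ n, Measurable (truncate j ∘ R n) := fun n =>
    (measurable_truncate j).comp (hR n).measurable
  have hq : Measurable (truncate j ∘ ψ) := (measurable_truncate j).comp hψ.measurable
  obtain ⟨G, hG⟩ := exists_cellAverage_comap_eq (truncate j ∘ ψ) unitMeasure
    (Function.uncurry W₀.K.W)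
  obtain ⟨C, hC⟩ := (Set.finite_range fun i => |G i|).bddAbove
  have hmass : ∀ a, Tendsto (fun n => unitMeasure.real ((truncate j ∘ R n) ⁻¹' {a})) atTop
      (nhds (unitMeasure.real ((truncate j ∘ ψ) ⁻¹' {a}))) := fun a =>
    hlim.mass _ (isClopen_truncate_preimage_singleton j a)
  have hmismatch : Tendsto (fun n => ∑ a, |unitMeasure.real ((truncate j ∘ R n) ⁻¹' {a}) -
      unitMeasure.real ((truncate j ∘ ψ) ⁻¹' {a})|) atTop (nhds 0) := by
    simpa only [abs_zero, Finset.sum_const_zero] using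
      tendsto_finsetSum Finset.univ fun a _ => (tendsto_sub_nhds_zero_iff.2 (hmass a)).abs
  have hstep : Tendsto (fun n => stepDeviation unitMeasure (truncate j ∘ R n)
      (Function.uncurry (W n).K.W) G) atTop (nhds 0) := by
    have hstep₀ : stepDeviation unitMeasure (truncate j ∘ ψ) (Function.uncurry W₀.K.W) G = 0 := by
      simp [← integral_abs_cellAverage_comap_sub hq W₀.K.integrable, hG]
    rw [← hstep₀]
    exact tendsto_stepDeviation hmass (fun a b => hlim.integral _ _
      (isClopen_truncate_preimage_singleton j a) (isClopen_truncate_preimage_singleton j b)) G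
  refine ⟨_, fun n => deltaCutS_le_of_labels (W n) W₀ (hp n) hq Prod.fst
    (fun x => ((hR n).color x).symm) (fun x => (hψ.color x).symm)
    fun i => hC (mem_range_self i), ?_⟩
  simpa only [hG, add_zero, mul_zero] using
    ((hδ.add hstep).add (hmismatch.const_mul (4 * C + Fintype.card S))).add_const _

theorem tendsto_deltaCutS_zero_of_codesTendsto (hR : ∀ n, IsCode (W n) (R n)) (hψ : IsCode W₀ ψ)
    (hW₀ : Measurable[(MeasurableSpace.comap ψ inferInstance).prod
      (MeasurableSpace.comap ψ inferInstance)] (Function.uncurry W₀.K.W))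
    (hlim : CodesTendsto W R W₀ ψ) {δ : ℕ → ℝ}
    (hδ : ∀ j, Tendsto (fun n => regularityError (W n) (R n) j) atTop (nhds (δ j)))
    (hδ_zero : Tendsto δ atTop (nhds 0)) :
    Tendsto (fun n => deltaCutS (W n) W₀) atTop (nhds 0) := by
  choose b hb hb_lim using fun j => exists_deltaCutS_le_tendsto hR hψ hlim (hδ j)
  refine tendsto_zero_of_le_double_limit (fun n => deltaCutS_nonneg _ _) hb hb_lim ?_
  rw [← iSup_truncateSigma, MeasurableSpace.comap_iSup] at hW₀
  have haverage := tendsto_integral_abs_cellAverage_sub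
    (fun i j hij => MeasurableSpace.comap_mono (truncateSigma_mono hij))
    (fun j => (MeasurableSpace.comap_mono (truncateSigma_le j)).trans hψ.measurable.comap_le)
    hW₀ W₀.K.integrable
  simpa only [add_zero] using hδ_zero.add haverage

end CodeConvergence

lemma exists_isCode_sum_sq_regularityError_le {S : Type*} [Countable S] [MeasurableSpace S]
    (W : CGraphon S) :
    ∃ R : ℝ → Code S, IsCode W R ∧
      ∀ J, ∑ j ∈ Finset.range J, regularityError W R j ^ 2 ≤ 4 := by
  have hmem : ∀ z, Function.uncurry W.K.W z ∈ Icc 0 1 := fun z => ⟨W.K.nonneg _ _, W.K.le_one _ _⟩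
  have hL2 : MemLp (Function.uncurry W.K.W) 2 (unitMeasure.prod unitMeasure) :=
    memLp_of_bounded (.of_forall hmem) W.K.measurable.aestronglyMeasurable 2
  obtain ⟨R, hR, hcolor, hsum⟩ :=
    exists_code_sum_sq_cutNormOn_le hL2 (measurable_to_countable' W.measC)
  have hsq : ∫ z, Function.uncurry W.K.W z ^ 2 ∂unitMeasure.prod unitMeasure ≤ 1 := by
    simpa using integral_mono hL2.integrable_sq (integrable_const 1) fun z =>
      pow_le_one₀ (hmem z).1 (hmem z).2
  exact ⟨R, ⟨hR, hcolor⟩, fun J => (hsum J).trans (by linarith)⟩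

lemma exists_subseq_codesTendsto {S : Type*} [Finite S] [TopologicalSpace S] [DiscreteTopology S]
    [MeasurableSpace S] [BorelSpace S] {W : ℕ → CGraphon S} {R : ℕ → ℝ → Code S}
    (hR : ∀ n, IsCode (W n) (R n)) :
    ∃ (φ : ℕ → ℕ) (W₀ : CGraphon S) (ψ : ℝ → Code S), StrictMono φ ∧ IsCode W₀ ψ ∧
      Measurable[(MeasurableSpace.comap ψ inferInstance).prod
        (MeasurableSpace.comap ψ inferInstance)] (Function.uncurry W₀.K.W) ∧
      CodesTendsto (W ∘ φ) (R ∘ φ) W₀ ψ := by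
  obtain ⟨φ, μ, w, hφ, hw, hw_mem, hw_symm, hmass, hint⟩ :=
    exists_subseq_tendsto_setIntegral_isClopen ⟨unitMeasure, inferInstance⟩
      (fun n => (hR n).measurable)
      (f := fun n z => ⟨(W n).K.W z.1 z.2, (W n).K.nonneg _ _, (W n).K.le_one _ _⟩)
      (fun n => (W n).K.measurable.subtype_mk) (fun n z => Subtype.ext ((W n).K.symm _ _))
  obtain ⟨ψ, hψ, hψμ⟩ := exists_measurable_map_unitMeasure_eq (μ : Measure (Code S))
  have hψψ : MeasurePreserving (Prod.map ψ ψ) (unitMeasure.prod unitMeasure)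
      ((μ : Measure (Code S)).prod μ) :=
    MeasurePreserving.prod ⟨hψ, hψμ⟩ ⟨hψ, hψμ⟩
  let W₀ : CGraphon S :=
    { K :=
        { W := fun x y => w (ψ x, ψ y)
          measurable := hw.comp (hψ.prodMap hψ)
          symm := fun x y => hw_symm (ψ y, ψ x)
          nonneg := fun x y => (hw_mem _).1
          le_one := fun x y => (hw_mem _).2 }
      c := fun x => (ψ x).1
      measC := fun s => (measurable_fst.comp hψ) (measurableSet_singleton s) }
  refine ⟨φ, W₀, ψ, hφ, ⟨hψ, fun x => rfl⟩, ?_, ⟨fun A hA => ?_, fun A B hA hB => ?_⟩⟩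
  · rw [← comap_prodMap]
    exact hw.comp (comap_measurable (Prod.map ψ ψ))
  · rw [← map_measureReal_apply hψ hA.2.measurableSet, hψμ]
    exact hmass A hA
  · have htransport := setIntegral_map (hA.2.measurableSet.prod hB.2.measurableSet)
      hw.aestronglyMeasurable hψψ.aemeasurable
    rw [hψψ.map_eq] at htransport
    exact htransport ▸ hint A B hA hB

/-- **Compactness of the space of `S`-colored graphons.** Every sequence of `S`-colored
graphons has a subsequence converging in the colored cut distance `δ_□^S` to some
`S`-colored graphon; i.e. the quotient space `(𝒲_S/∼, δ_□^S)` is compact. -/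
theorem colored_graphon_space_compact
    {S : Type*} [Fintype S] (W : ℕ → CGraphon S) :
    ∃ (φ : ℕ → ℕ) (W₀ : CGraphon S), StrictMono φ ∧
      Tendsto (fun k => deltaCutS (W (φ k)) W₀) atTop (nhds 0) := by
  let _ : TopologicalSpace S := ⊥
  have : DiscreteTopology S := ⟨rfl⟩
  borelize S
  choose R hR hsum using fun n => exists_isCode_sum_sq_regularityError_le (W n)
  obtain ⟨φ, δ, hφ, hδ, hδ_zero⟩ := exists_subseq_tendsto_of_sum_sq_le hsum
  obtain ⟨θ, W₀, ψ, hθ, hψ, hW₀, hlim⟩ := exists_subseq_codesTendsto fun n => hR (φ n)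
  refine ⟨φ ∘ θ, W₀, hφ.comp hθ, ?_⟩
  exact tendsto_deltaCutS_zero_of_codesTendsto (fun n => hR (φ (θ n))) hψ hW₀ hlim
    (fun j => (hδ j).comp hθ.tendsto_atTop) hδ_zero

end
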